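/- Let (G,x,y) encode a reflexive regular map that is simple, satisfies 2q² > |G| (density exceeding 1/2), has p = 3, and is not the tetrahedral map tet, and suppose the even period satisfies T = q. Then (G,x,y) is the Fermat map Fer(1); in particular q = 2 and |G| = 6. -/

import Mathlib

namespace RegularMap

variable {G : Type*} [Group G]

/-- The vertex set of the map: left cosets of the cyclic subgroup generated by `y`. -/
abbrev Vertex (y : G) : Type _ := G ⧸ Subgroup.zpowers y

/-- The rotation about the vertex `v = g⟨y⟩`, namely `g * y * g⁻¹`. -/
def rot (y : G) (v : Vertex y) : G :=
  Quotient.liftOn' v (fun g => g * y * g⁻¹) (by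
    intro a b h
    obtain ⟨k, hk⟩ := QuotientGroup.leftRel_apply.mp h
    have hk' : y ^ k = a⁻¹ * b := hk
    have hb : b = a * y ^ k := by rw [hk']; group
    subst hb
    group)

/-- Two vertices are adjacent iff they are distinct and form the endpoint pair of
some edge `g⟨x*y⟩`, whose endpoints are `g⟨y⟩` and `g*x*y⟨y⟩`. -/
def Adj (x y : G) (v w : Vertex y) : Prop :=
  v ≠ w ∧ ∃ g : G,
    ({v, w} : Set (Vertex y)) = {QuotientGroup.mk g, QuotientGroup.mk (g * x * y)}

/-- The map is simple: no edge has equal endpoints, and distinct edges (left cosets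
of `⟨x*y⟩`) have distinct endpoint pairs. -/
def IsSimple (x y : G) : Prop :=
  (∀ g : G, (QuotientGroup.mk g : Vertex y) ≠ QuotientGroup.mk (g * x * y)) ∧
  ∀ g h : G,
    ({QuotientGroup.mk g, QuotientGroup.mk (g * x * y)} : Set (Vertex y)) =
      {QuotientGroup.mk h, QuotientGroup.mk (h * x * y)} →
    (QuotientGroup.mk g : G ⧸ Subgroup.zpowers (x * y)) = QuotientGroup.mk h

/-- The map is reflexive: some group automorphism inverts both `x` and `y`. -/
def IsReflexive (x y : G) : Prop :=
  ∃ σ : G ≃* G, σ x = x⁻¹ ∧ σ y = y⁻¹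

/-- An automorphism of the map (given a reflection σ): either orientation preserving,
`g⟨y⟩ ↦ a*g⟨y⟩`, or orientation reversing, `g⟨y⟩ ↦ a*σ(g)⟨y⟩`. -/
def IsMapAut (y : G) (σ : G ≃* G) (φ : Vertex y → Vertex y) : Prop :=
  (∃ a : G, ∀ g : G, φ (QuotientGroup.mk g) = QuotientGroup.mk (a * g)) ∨
  (∃ a : G, ∀ g : G, φ (QuotientGroup.mk g) = QuotientGroup.mk (a * σ g))

/-- `v'` is a diagonal neighbour of `v`: `v' = S_w² • v` for some vertex `w` adjacent to `v`. -/
def DiagNeighbor (x y : G) (v v' : Vertex y) : Prop :=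
  ∃ w : Vertex y, Adj x y v w ∧ v' = rot y w ^ 2 • v

/-- Diagonal alignment: the reflexive-transitive closure of the diagonal-neighbour relation. -/
def Aligned (x y : G) : Vertex y → Vertex y → Prop :=
  Relation.ReflTransGen (DiagNeighbor x y)

/-- The primitive period `J`: the least `j ≥ 1` such that `S_v^j` fixes every vertex
diagonally aligned with `v` (this is independent of `v`). -/
noncomputable def primPeriod (x y : G) : ℕ :=
  sInf {j : ℕ | 1 ≤ j ∧ ∀ v v' : Vertex y, Aligned x y v v' → rot y v ^ j • v' = v'}

/-- The even period `T = lcm(J, 2)`. -/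
noncomputable def evenPeriod (x y : G) : ℕ := Nat.lcm (primPeriod x y) 2

/-- Relators of the tetrahedral group ⟨X,Y ∣ X³, Y³, (XY)²⟩. -/
def tetRels : Set (FreeGroup (Fin 2)) :=
  {FreeGroup.of 0 ^ 3, FreeGroup.of 1 ^ 3, (FreeGroup.of 0 * FreeGroup.of 1) ^ 2}

/-- Relators of the Fermat group ⟨X,Y ∣ X³, Y^(2n), (XY)², [X,Y]³⟩. -/
def fermatRels (n : ℕ) : Set (FreeGroup (Fin 2)) :=
  {FreeGroup.of 0 ^ 3, FreeGroup.of 1 ^ (2 * n), (FreeGroup.of 0 * FreeGroup.of 1) ^ 2,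
    (FreeGroup.of 0 * FreeGroup.of 1 * (FreeGroup.of 0)⁻¹ * (FreeGroup.of 1)⁻¹) ^ 3}

/-- `(G,x,y)` is the tetrahedral map: the canonical homomorphism from the presented
group ⟨X,Y ∣ X³, Y³, (XY)²⟩ sending X to x and Y to y is an isomorphism. -/
def IsTet (G : Type*) [Group G] (x y : G) : Prop :=
  ∃ e : PresentedGroup tetRels ≃* G,
    e (PresentedGroup.of 0) = x ∧ e (PresentedGroup.of 1) = y

/-- `(G,x,y)` is the Fermat map `Fer(n)`: the canonical homomorphism from the Fermat
group `G_n` sending X to x and Y to y is an isomorphism. -/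
def IsFermat (n : ℕ) (G : Type*) [Group G] (x y : G) : Prop :=
  ∃ e : PresentedGroup (fermatRels n) ≃* G,
    e (PresentedGroup.of 0) = x ∧ e (PresentedGroup.of 1) = y

section helpers

theorem hx_inv {x y : G} (hxy : (x * y) ^ 2 = 1) : x⁻¹ = y * x * y := by
  apply inv_eq_of_mul_eq_one_right
  rw [← hxy, pow_two]; group

theorem hx_inv2 {x : G} (hx : x ^ 3 = 1) : x⁻¹ * x⁻¹ = x := by
  have : x * x * x = 1 := by rw [← hx, pow_succ, pow_two]
  calc x⁻¹ * x⁻¹ = x⁻¹ * x⁻¹ * (x * x * x) := by rw [this, mul_one]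
    _ = x := by group

theorem hy_eq {x y : G} (hxy : (x * y) ^ 2 = 1) : y = x⁻¹ * y⁻¹ * x⁻¹ := by
  calc y = x⁻¹ * (x * y) ^ 2 * y⁻¹ * x⁻¹ := by rw [pow_two]; group
    _ = _ := by rw [hxy, mul_one]

theorem t_sym {x y : G} (hx : x ^ 3 = 1) (hxy : (x * y) ^ 2 = 1) :
    x⁻¹ * y * x⁻¹ = x * y⁻¹ * x := by
  calc x⁻¹ * y * x⁻¹ = x⁻¹ * (x⁻¹ * y⁻¹ * x⁻¹) * x⁻¹ := by rw [← hy_eq hxy]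
    _ = (x⁻¹ * x⁻¹) * y⁻¹ * (x⁻¹ * x⁻¹) := by group
    _ = _ := by rw [hx_inv2 hx]

theorem diag_eq {x y : G} (hx : x ^ 3 = 1) (hxy : (x * y) ^ 2 = 1) :
    x * y ^ 2 * x⁻¹ = y⁻¹ * (x * y⁻¹ * x) := by
  have h : x * y = y⁻¹ * x⁻¹ := by
    calc x * y = (x * y) ^ 2 * y⁻¹ * x⁻¹ := by rw [pow_two]; group
      _ = _ := by rw [hxy, one_mul]
  calc x * y ^ 2 * x⁻¹ = (x * y) * y * x⁻¹ := by rw [pow_two]; group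
    _ = y⁻¹ * (x⁻¹ * y * x⁻¹) := by rw [h]; group
    _ = _ := by rw [t_sym hx hxy]

theorem mk_eq_iff {y a b : G} : (QuotientGroup.mk a : Vertex y) = QuotientGroup.mk b ↔
    ∃ n : ℤ, b = a * y ^ n := by
  rw [QuotientGroup.eq, Subgroup.mem_zpowers_iff]
  constructor
  · rintro ⟨n, hn⟩; exact ⟨n, by rw [hn]; group⟩
  · rintro ⟨n, rfl⟩; exact ⟨n, by group⟩

theorem simple_x {x y : G} (hs : IsSimple x y) (n : ℤ) : x ≠ y ^ n := by
  intro h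
  apply hs.1 1
  rw [mk_eq_iff]
  exact ⟨n + 1, by rw [h, zpow_add]; group⟩

theorem simple_inj {x y : G} (hxy : (x * y) ^ 2 = 1) (hs : IsSimple x y) {n m : ℤ}
    (h : y ^ n * x = x * y ^ m) : y ^ n = 1 := by
  have h1 := hs.2 (y ^ n) 1 (by
    have e1 : (QuotientGroup.mk (y ^ n) : Vertex y) = QuotientGroup.mk 1 := by
      rw [mk_eq_iff]; exact ⟨-n, by group⟩
    have e2 : (QuotientGroup.mk (y ^ n * x * y) : Vertex y) = QuotientGroup.mk (1 * x * y) := by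
      rw [mk_eq_iff]; exact ⟨-m, by rw [h]; group⟩
    rw [e1, e2])
  rw [QuotientGroup.eq, Subgroup.mem_zpowers_iff] at h1
  obtain ⟨k, hk⟩ := h1
  have hk' : (x * y) ^ k = y ^ (-n) := by rw [hk]; group
  rcases Int.even_or_odd' k with ⟨l, rfl | rfl⟩
  · rw [zpow_mul] at hk'
    have : (x * y) ^ (2:ℤ) = 1 := by exact_mod_cast hxy
    rw [this, one_zpow] at hk'
    rw [zpow_neg] at hk'
    exact inv_eq_one.mp hk'.symm
  · rw [zpow_add, zpow_mul] at hk'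
    have : (x * y) ^ (2:ℤ) = 1 := by exact_mod_cast hxy
    rw [this, one_zpow, one_mul, zpow_one] at hk'
    exact absurd (show x = y ^ (-n - 1) by rw [zpow_sub_one, ← hk']; group) (simple_x hs _)

theorem rot_mk (y g : G) : rot y (QuotientGroup.mk g) = g * y * g⁻¹ := rfl

theorem conj_npow (g y : G) (n : ℕ) : (g * y * g⁻¹) ^ n = g * y ^ n * g⁻¹ := conj_pow

theorem diag_mk {x y : G} (hx : x ^ 3 = 1) (hxy : (x * y) ^ 2 = 1) {g : G} {v' : Vertex y}
    (h : DiagNeighbor x y (QuotientGroup.mk g) v') :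
    ∃ n : ℤ, v' = QuotientGroup.mk (g * y ^ n * (x * y⁻¹ * x)) := by
  obtain ⟨w, ⟨hne, e, he⟩, rfl⟩ := h
  have key : ∃ f : G, (QuotientGroup.mk g : Vertex y) = QuotientGroup.mk f ∧
      w = QuotientGroup.mk (f * x * y) := by
    rcases Set.pair_eq_pair_iff.mp he with ⟨h1, h2⟩ | ⟨h1, h2⟩
    · exact ⟨e, h1, h2⟩
    · refine ⟨e * x * y, h1, ?_⟩
      rw [h2]; congr 1
      calc e = e * (x * y) ^ 2 := by rw [hxy, mul_one]
        _ = _ := by rw [pow_two]; group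
  obtain ⟨f, h1, rfl⟩ := key
  obtain ⟨n, rfl⟩ := mk_eq_iff.mp h1
  refine ⟨n - 1, ?_⟩
  rw [h1, rot_mk, conj_npow]
  change QuotientGroup.mk _ = _
  congr 1
  calc g * y ^ n * x * y * y ^ 2 * (g * y ^ n * x * y)⁻¹ * (g * y ^ n)
      = g * y ^ n * (x * y ^ 2 * x⁻¹) := by group
    _ = _ := by rw [diag_eq hx hxy]; group

theorem aligned_mk {x y : G} (hx : x ^ 3 = 1) (hxy : (x * y) ^ 2 = 1) {d : ℕ} {m : ℤ}
    (ht : y ^ d * (x * y⁻¹ * x) = (x * y⁻¹ * x) * (y ^ d) ^ m) {g : G} {v' : Vertex y}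
    (h : Aligned x y (QuotientGroup.mk g) v') :
    ∃ l : G, v' = QuotientGroup.mk (g * l) ∧ ∃ n : ℤ, y ^ d * l = l * (y ^ d) ^ n := by
  induction h with
  | refl => exact ⟨1, by simp, 1, by simp⟩
  | tail _ hd ih =>
    obtain ⟨l, rfl, n, hn⟩ := ih
    obtain ⟨j, rfl⟩ := diag_mk hx hxy hd
    refine ⟨l * y ^ j * (x * y⁻¹ * x), by simp only [mul_assoc], m * n, ?_⟩
    set t := x * y⁻¹ * x
    have e1 : ∀ n : ℤ, (y ^ d) ^ n * t = t * (y ^ d) ^ (m * n) := by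
      intro n
      have : y ^ d = t * (y ^ d) ^ m * t⁻¹ := by rw [← ht]; group
      calc (y ^ d) ^ n * t = (t * (y ^ d) ^ m * t⁻¹) ^ n * t := by rw [← this]
        _ = _ := by rw [conj_zpow, zpow_mul]; group
    calc y ^ d * (l * y ^ j * t) = (y ^ d * l) * y ^ j * t := by group
      _ = l * ((y ^ d) ^ n * y ^ j) * t := by rw [hn]; group
      _ = l * (y ^ j * (y ^ d) ^ n) * t := by
          congr 2
          exact (((Commute.refl y).pow_left d).zpow_left n).zpow_right j
      _ = l * y ^ j * ((y ^ d) ^ n * t) := by group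
      _ = _ := by rw [e1]; group

theorem primPeriod_le [Finite G] {x y : G} (hx : x ^ 3 = 1) (hxy : (x * y) ^ 2 = 1) {i : ℕ}
    (hi : 0 < i) {n : ℤ}
    (ht : y ^ i * (x * y⁻¹ * x) = (x * y⁻¹ * x) * y ^ n) :
    primPeriod x y ≤ i.gcd (orderOf y) ∧ ∃ l : ℤ, y ^ (i.gcd (orderOf y)) * (x * y⁻¹ * x) =
      (x * y⁻¹ * x) * y ^ l := by
  set t := x * y⁻¹ * x
  set q := orderOf y
  set d := i.gcd q
  have hd0 : 0 < d := Nat.gcd_pos_of_pos_left _ hi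
  have hq0 : 0 < q := orderOf_pos y
  have e1 : y ^ d = (y ^ i) ^ (i.gcdA q) := by
    rw [← zpow_natCast y d, Nat.gcd_eq_gcd_ab, zpow_add, zpow_mul, zpow_mul, zpow_natCast,
      zpow_natCast, pow_orderOf_eq_one, one_zpow, mul_one]
  have hty : y ^ i = t * y ^ n * t⁻¹ := by rw [← ht]; group
  have e2 : y ^ d * t = t * y ^ (n * i.gcdA q) := by
    rw [e1, hty, conj_zpow, zpow_mul]; group
  refine ⟨?_, _, e2⟩
  obtain ⟨c, hc⟩ : d ∣ q := Nat.gcd_dvd_right _ _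
  obtain ⟨m, hm⟩ : (d : ℤ) ∣ n * i.gcdA q := by
    have : y ^ (n * i.gcdA q * c) = 1 := by
      have : y ^ (n * i.gcdA q) = t⁻¹ * y ^ d * t := by
        rw [mul_assoc, e2]; group
      rw [zpow_mul, this]
      have := @conj_zpow G _ (c:ℤ) t⁻¹ (y ^ d)
      rw [inv_inv] at this
      rw [this, zpow_natCast, ← pow_mul, ← hc, pow_orderOf_eq_one]; group
    have h2 := orderOf_dvd_iff_zpow_eq_one.mpr this
    have h3 : ((d * c : ℕ) : ℤ) ∣ n * i.gcdA q * c := by rw [← hc]; exact h2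
    push_cast at h3
    have hc0 : (c : ℤ) ≠ 0 := by rintro h; have : c = 0 := by exact_mod_cast h
                                 subst this; omega
    exact Int.dvd_of_mul_dvd_mul_right hc0 h3
  have e3 : y ^ d * t = t * (y ^ d) ^ m := by
    rw [e2, hm, zpow_mul, zpow_natCast]
  apply Nat.sInf_le
  refine ⟨hd0, ?_⟩
  intro v v' hv
  induction v using QuotientGroup.induction_on with
  | H g =>
    obtain ⟨l, rfl, k, hk⟩ := aligned_mk hx hxy e3 hv
    rw [rot_mk, conj_npow]
    change QuotientGroup.mk _ = _
    symm
    rw [mk_eq_iff]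
    refine ⟨d * k, ?_⟩
    calc g * y ^ d * g⁻¹ * (g * l) = g * (y ^ d * l) := by group
      _ = _ := by rw [hk, zpow_mul, zpow_natCast]; group

end helpers

section counting

/-- The double coset of `g`. -/
def dc (y g : G) : Set G := {z | ∃ i j : ℤ, z = y ^ i * g * y ^ j}

theorem dc_disjoint {y g g' : G} (h : ∀ i j : ℤ, g' ≠ y ^ i * g * y ^ j) :
    Disjoint (dc y g) (dc y g') := by
  rw [Set.disjoint_left]
  rintro z ⟨i, j, rfl⟩ ⟨i', j', h'⟩
  apply h (-i' + i) (j - j')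
  calc g' = y ^ (-i') * (y ^ i' * g' * y ^ j') * y ^ (-j') := by group
    _ = _ := by rw [← h']; group

theorem dc_card [Finite G] {y g : G} {a : ℕ}
    (h : ∀ i : ℕ, 0 < i → i < a → ∀ n : ℤ, y ^ i * g ≠ g * y ^ n) :
    a * orderOf y ≤ (dc y g).ncard := by
  classical
  let f : ℕ × ℕ → G := fun p => y ^ p.1 * g * y ^ p.2
  let S := Finset.range a ×ˢ Finset.range (orderOf y)
  have hlt : ∀ i j i' j' : ℕ, i < a → i' < i → f (i, j) ≠ f (i', j') := by
    intro i j i' j' hi hii he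
    apply h (i - i') (by omega) (by omega) ((j' : ℤ) - j)
    have he' : y ^ i * g * y ^ j = y ^ i' * g * y ^ j' := he
    have e2 : y ^ i = y ^ i' * y ^ (i - i') := by rw [← pow_add]; congr 1; omega
    rw [e2] at he'
    have e3 : y ^ (i - i') * g * y ^ j = g * y ^ j' := by
      apply mul_left_cancel (a := y ^ i')
      simpa only [mul_assoc] using he'
    rw [zpow_sub, zpow_natCast, zpow_natCast, ← mul_assoc, ← e3]; group
  have hinj : Set.InjOn f S := by
    rintro ⟨i, j⟩ hp ⟨i', j'⟩ hp' he
    simp only [S, Finset.coe_product, Set.mem_prod, Finset.coe_range, Set.mem_Iio] at hp hp'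
    rcases lt_trichotomy i i' with hl | hl | hl
    · exact absurd he.symm (hlt _ _ _ _ hp'.1 hl)
    · subst hl
      have : y ^ j = y ^ j' := mul_left_cancel he
      have := pow_injOn_Iio_orderOf hp.2 hp'.2 this
      rw [this]
    · exact absurd he (hlt _ _ _ _ hp.1 hl)
  have hsub : f '' S ⊆ dc y g := by
    rintro _ ⟨⟨i, j⟩, _, rfl⟩
    exact ⟨i, j, by simp [f]⟩
  calc a * orderOf y = (S : Set (ℕ × ℕ)).ncard := by
        rw [Set.ncard_coe_finset]; simp [S]
    _ = (f '' S).ncard := hinj.ncard_image.symm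
    _ ≤ _ := Set.ncard_le_ncard hsub (Set.toFinite _)

theorem ncard_le_G [Finite G] (s : Set G) : s.ncard ≤ Nat.card G := by
  rw [← Set.ncard_univ]; exact Set.ncard_le_ncard (Set.subset_univ _) (Set.toFinite _)

theorem card2 [Finite G] {s t : Set G} (h : Disjoint s t) :
    s.ncard + t.ncard ≤ Nat.card G := by
  rw [← Set.ncard_union_eq h (Set.toFinite _) (Set.toFinite _)]
  exact ncard_le_G _

theorem card3 [Finite G] {s t u : Set G} (h : Disjoint s t) (h2 : Disjoint s u)
    (h3 : Disjoint t u) : s.ncard + t.ncard + u.ncard ≤ Nat.card G := by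
  rw [← Set.ncard_union_eq h (Set.toFinite _) (Set.toFinite _)]
  exact card2 (Set.disjoint_union_left.mpr ⟨h2, h3⟩)

theorem card4 [Finite G] {s t u v : Set G} (h : Disjoint s t) (h2 : Disjoint s u)
    (h3 : Disjoint t u) (h4 : Disjoint s v) (h5 : Disjoint t v) (h6 : Disjoint u v) :
    s.ncard + t.ncard + u.ncard + v.ncard ≤ Nat.card G := by
  rw [← Set.ncard_union_eq h (Set.toFinite _) (Set.toFinite _)]
  exact card3 (Set.disjoint_union_left.mpr ⟨h2, h3⟩) (Set.disjoint_union_left.mpr ⟨h4, h5⟩) h6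

end counting

section fermat

theorem presented_card {P : Type*} [Group P] {X Y : P} (hg : Subgroup.closure {X, Y} = ⊤)
    (hX : X ^ 3 = 1) (hY : Y ^ 2 = 1) (hXY : (X * Y) ^ 2 = 1) :
    Finite P ∧ Nat.card P ≤ 6 := by
  have hYX : Y * X = X ^ 2 * Y := by
    have h1 : X⁻¹ = Y * X * Y := hx_inv hXY
    have h2 : X⁻¹ = X ^ 2 := by
      apply inv_eq_of_mul_eq_one_right; rw [← hX, pow_succ' X 2]
    have h3 : Y * Y = 1 := by rw [← hY, pow_two]
    rw [← h2, h1, mul_assoc, h3, mul_one]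
  have hYX2 : ∀ i : ℕ, Y * X ^ i = X ^ (2 * i) * Y := by
    intro i
    induction i with
    | zero => simp
    | succ i ih => rw [pow_succ, ← mul_assoc, ih, mul_assoc, hYX, ← mul_assoc, ← pow_add]; rfl
  have hall : ∀ g : P, ∃ i j : ℕ, g = X ^ i * Y ^ j := by
    intro g
    have hm : g ∈ Subgroup.closure {X, Y} := by rw [hg]; trivial
    have hXi : X⁻¹ = X ^ 2 := by
      apply inv_eq_of_mul_eq_one_right; rw [← hX, pow_succ' X 2]
    have hYi : Y⁻¹ = Y := by
      apply inv_eq_of_mul_eq_one_right; rw [← hY, pow_two]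
    induction hm using Subgroup.closure_induction_left with
    | one => exact ⟨0, 0, by simp⟩
    | mul_left a ha b hb ih =>
      obtain ⟨i, j, rfl⟩ := ih
      rcases ha with rfl | rfl
      · exact ⟨i + 1, j, by rw [pow_succ']; group⟩
      · exact ⟨2 * i, j + 1, by rw [← mul_assoc, hYX2, pow_succ' a j, mul_assoc]⟩
    | inv_mul_cancel a ha b hb ih =>
      obtain ⟨i, j, rfl⟩ := ih
      rcases ha with rfl | rfl
      · exact ⟨2 + i, j, by rw [hXi, pow_add]; group⟩
      · exact ⟨2 * i, j + 1, by rw [hYi, ← mul_assoc, hYX2, pow_succ' a j, mul_assoc]⟩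
  let f : Fin 3 × Fin 2 → P := fun p => X ^ (p.1 : ℕ) * Y ^ (p.2 : ℕ)
  have hf : Function.Surjective f := by
    intro g
    obtain ⟨i, j, rfl⟩ := hall g
    refine ⟨(⟨i % 3, Nat.mod_lt _ (by norm_num)⟩, ⟨j % 2, Nat.mod_lt _ (by norm_num)⟩), ?_⟩
    change X ^ (i % 3) * Y ^ (j % 2) = _
    congr 1
    · conv_rhs => rw [← Nat.div_add_mod i 3, pow_add, pow_mul, hX, one_pow, one_mul]
    · conv_rhs => rw [← Nat.div_add_mod j 2, pow_add, pow_mul, hY, one_pow, one_mul]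
  refine ⟨Finite.of_surjective f hf, ?_⟩
  calc Nat.card P ≤ Nat.card (Fin 3 × Fin 2) := Nat.card_le_card_of_surjective f hf
    _ = 6 := by simp

theorem fermat_of (G : Type*) [Group G] [Finite G] (x y : G)
    (hgen : Subgroup.closure {x, y} = ⊤) (hxy : (x * y) ^ 2 = 1)
    (hp : orderOf x = 3) (hq : orderOf y = 2) :
    IsFermat 1 G x y ∧ orderOf y = 2 ∧ Nat.card G = 6 := by
  have hx3 : x ^ 3 = 1 := by rw [← hp]; exact pow_orderOf_eq_one x
  have hy2 : y ^ 2 = 1 := by rw [← hq]; exact pow_orderOf_eq_one y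
  have hc : Nat.card G = 6 := by
    have h1 := (presented_card hgen hx3 hy2 hxy).2
    have h2 : 3 ∣ Nat.card G := hp ▸ orderOf_dvd_natCard x
    have h3 : 2 ∣ Nat.card G := hq ▸ orderOf_dvd_natCard y
    have h4 : 0 < Nat.card G := Nat.card_pos
    omega
  refine ⟨?_, hq, hc⟩
  have hrel : ∀ r ∈ fermatRels 1, FreeGroup.lift ![x, y] r = 1 := by
    intro r hr
    rcases hr with rfl | rfl | rfl | rfl
    · simpa using hx3
    · simpa using hy2
    · simpa using hxy
    · have hyi : y⁻¹ = y := by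
        apply inv_eq_of_mul_eq_one_right; rw [← hy2, pow_two]
      have e : x * y * x⁻¹ * y⁻¹ = x⁻¹ := by
        have := hx_inv2 hx3
        have h2 := hx_inv hxy
        calc x * y * x⁻¹ * y⁻¹ = x * y * (y * x * y) * y⁻¹ := by rw [← h2]
          _ = x * y ^ 2 * x := by rw [pow_two]; group
          _ = x * x := by rw [hy2, mul_one]
          _ = x ^ 3 * x⁻¹ := by rw [pow_succ, pow_two]; group
          _ = _ := by rw [hx3, one_mul]
      simp only [map_pow, map_mul, map_inv, FreeGroup.lift_apply_of, Matrix.cons_val_zero,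
        Matrix.cons_val_one]
      rw [e, inv_pow, hx3, inv_one]
  let φ : PresentedGroup (fermatRels 1) →* G := PresentedGroup.toGroup hrel
  have h0 : φ (PresentedGroup.of 0) = x := PresentedGroup.toGroup.of hrel
  have h1 : φ (PresentedGroup.of 1) = y := PresentedGroup.toGroup.of hrel
  have hsurj : Function.Surjective φ := by
    rw [← MonoidHom.range_eq_top, eq_top_iff, ← hgen, Subgroup.closure_le]
    rintro z (rfl | rfl)
    · exact ⟨_, h0⟩
    · exact ⟨_, h1⟩
  have hPg : Subgroup.closure {(PresentedGroup.of 0 : PresentedGroup (fermatRels 1)),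
      PresentedGroup.of 1} = ⊤ := by
    rw [← PresentedGroup.closure_range_of (fermatRels 1)]
    congr 1
    ext z
    simp only [Set.mem_insert_iff, Set.mem_singleton_iff, Set.mem_range, Fin.exists_fin_two]
    constructor
    · rintro (h | h)
      · exact Or.inl h.symm
      · exact Or.inr h.symm
    · rintro (h | h)
      · exact Or.inl h.symm
      · exact Or.inr h.symm
  have hP := presented_card hPg
    (PresentedGroup.one_of_mem (rels := fermatRels 1) (x := FreeGroup.of 0 ^ 3)
      (by simp [fermatRels]))
    (PresentedGroup.one_of_mem (rels := fermatRels 1) (x := FreeGroup.of 1 ^ (2 * 1))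
      (by simp [fermatRels]))
    (PresentedGroup.one_of_mem (rels := fermatRels 1)
      (x := (FreeGroup.of 0 * FreeGroup.of 1) ^ 2) (by simp [fermatRels]))
  have := hP.1
  have hbij : Function.Bijective φ := by
    rw [Nat.bijective_iff_surjective_and_card]
    refine ⟨hsurj, le_antisymm (hc ▸ hP.2) (Nat.card_le_card_of_surjective φ hsurj)⟩
  exact ⟨MulEquiv.ofBijective φ hbij, h0, h1⟩

end fermat

section core

theorem t_not_x {x y : G} (hx : x ^ 3 = 1) (hxy : (x * y) ^ 2 = 1) (hs : IsSimple x y)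
    (hr : IsReflexive x y) (hq : Even (orderOf y)) (i j : ℤ) :
    x * y⁻¹ * x ≠ y ^ i * x * y ^ j := by
  intro h
  obtain ⟨σ, h1, h2⟩ := hr
  have e := congrArg σ h
  simp only [map_mul, map_inv, map_zpow, h1, h2, inv_inv] at e
  rw [t_sym hx hxy, h] at e
  have e2 : y ^ i * x * y ^ j = y ^ (1 - i) * x * y ^ (1 - j) := by
    rw [e, hx_inv hxy, inv_zpow', inv_zpow', zpow_sub, zpow_sub]; group
  have e3 : y ^ (2 * i - 1) * x = x * y ^ (1 - 2 * j) := by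
    calc y ^ (2 * i - 1) * x = y ^ (i - 1) * (y ^ i * x * y ^ j) * y ^ (- j) := by group
      _ = _ := by rw [e2]; group
  have e4 := orderOf_dvd_iff_zpow_eq_one.mpr (simple_inj hxy hs e3)
  obtain ⟨m, hm⟩ := hq
  rw [hm] at e4
  obtain ⟨n, hn⟩ := e4
  push_cast at hn
  have : 2 * i - 1 = 2 * (m * n) := by rw [hn]; ring
  omega

theorem swap_facts {x y u : G} {k : ℕ} (hx : x ^ 3 = 1) (hxy : (x * y) ^ 2 = 1)
    (huk : u = y ^ k) (hk : Odd k) (hu : u * u = 1)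
    (hut : u * (x * y⁻¹ * x) = (x * y⁻¹ * x) * u) :
    ∃ b, b = x * u * x⁻¹ ∧ b * b = 1 ∧ u * b * u = b * u * b ∧ y * b = u * b * u * y ∧
      x * b = u * b * u * x := by
  have huy : u * y = y * u := by rw [huk]; exact (Commute.refl y).pow_left k
  have huy' : y⁻¹ * u = u * y⁻¹ := by
    calc y⁻¹ * u = y⁻¹ * (u * y) * y⁻¹ := by group
      _ = _ := by rw [huy]; group
  obtain ⟨b, hb⟩ : ∃ b, b = x * u * x⁻¹ := ⟨_, rfl⟩
  obtain ⟨c, hc⟩ : ∃ c, c = x⁻¹ * u * x := ⟨_, rfl⟩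
  have hbb : b * b = 1 := by
    calc b * b = x * (u * u) * x⁻¹ := by rw [hb]; group
      _ = 1 := by rw [hu]; group
  have hyx : y * x = x⁻¹ * y⁻¹ := by
    rw [hx_inv hxy]; group
  have hyx' : y⁻¹ * x⁻¹ = x * y := by
    rw [hx_inv hxy]; group
  have h1 : y * b = c * y := by
    calc y * b = (y * x) * u * x⁻¹ := by rw [hb]; group
      _ = x⁻¹ * (y⁻¹ * u) * x⁻¹ := by rw [hyx]; group
      _ = x⁻¹ * u * (y⁻¹ * x⁻¹) := by rw [huy']; group
      _ = c * y := by rw [hyx', hc]; group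
  have h2 : y * c = b * y := by
    rw [← t_sym hx hxy] at hut
    calc y * c = x * (x⁻¹ * y * x⁻¹ * u) * x := by rw [hc]; group
      _ = _ := by rw [← hut, hb]; group
  have h3 : ∀ m : ℕ, y ^ (2 * m + 1) * b = c * y ^ (2 * m + 1) := by
    intro m
    induction m with
    | zero => simpa using h1
    | succ m ih =>
      have e : y ^ (2 * (m + 1) + 1) = y * y * y ^ (2 * m + 1) := by
        rw [show 2 * (m + 1) + 1 = (2 * m + 1) + 1 + 1 by ring, pow_succ', pow_succ' y (2 * m + 1),
          mul_assoc]
      rw [e, mul_assoc, ih]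
      calc y * y * (c * y ^ (2 * m + 1)) = y * (y * c) * y ^ (2 * m + 1) := by
            simp only [mul_assoc]
        _ = (y * b) * (y * y ^ (2 * m + 1)) := by rw [h2]; simp only [mul_assoc]
        _ = _ := by rw [h1]; simp only [mul_assoc]
  obtain ⟨m, hm⟩ := hk
  have h4 : u * b = c * u := by rw [huk, hm]; exact h3 m
  have h5 : c = u * b * u := by rw [h4, mul_assoc, hu, mul_one]
  have hxb : x * b = c * x := by
    rw [hb, hc]
    calc x * (x * u * x⁻¹) = x * x * u * x⁻¹ := by group
      _ = (x⁻¹ * x⁻¹ * (x⁻¹ * x⁻¹)) * u * x⁻¹ := by rw [hx_inv2 hx]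
      _ = x⁻¹ * (x⁻¹ * x⁻¹) * x⁻¹ * u * x⁻¹ := by group
      _ = x⁻¹ * u * x⁻¹ := by rw [hx_inv2 hx]; group
      _ = x⁻¹ * u * (x * x) := by
          congr 1
          calc x⁻¹ = x⁻¹ * x ^ 3 := by rw [hx, mul_one]
            _ = _ := by rw [pow_succ, pow_two]; group
      _ = _ := by group
  have hxc : x * c = u * x := by rw [hc]; group
  have hxu : x * u = b * x := by rw [hb]; group
  have h6 : b * c = u * b := by
    have := congrArg (fun z => x * z) h4
    simp only [← mul_assoc] at this
    rw [hxu, hxc, mul_assoc b, hxb, mul_assoc u, hxu] at this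
    apply mul_right_cancel (b := x)
    rw [mul_assoc, this, mul_assoc]
  have h7 : c = b * u * b := by
    rw [mul_assoc, ← h6, ← mul_assoc, hbb, one_mul]
  exact ⟨b, hb, hbb, h5 ▸ h7, by rw [← h5, h1], by rw [← h5, hxb]⟩

theorem cube_comm {X Y c z : G} (hX : X ^ 3 = 1) (hXY : (X * Y) ^ 2 = 1) (hc : c * c = Y)
    (hzX : z * X = X * z) (hzc : z * c = c * z)
    (h : X * Y⁻¹ * X = c * X * c * z) : c ^ 3 * X = X * c ^ 3 := by
  rw [← t_sym hX hXY] at h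
  have h1 : c * c * X⁻¹ = X * c * X * c * z := by
    calc c * c * X⁻¹ = X * (X⁻¹ * Y * X⁻¹) := by rw [hc]; group
      _ = _ := by rw [h]; group
  have h2 : X⁻¹ * (c * c) = c * X * c * X * z := by
    calc X⁻¹ * (c * c) = (X⁻¹ * Y * X⁻¹) * X := by rw [hc]; group
      _ = c * X * c * (z * X) := by rw [h]; group
      _ = _ := by rw [hzX]; group
  have h3 : c ^ 3 * X⁻¹ = X⁻¹ * c ^ 3 := by
    calc c ^ 3 * X⁻¹ = c * (c * c * X⁻¹) := by rw [pow_succ, pow_two]; group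
      _ = c * X * c * X * (c * z) := by rw [h1]; group
      _ = (c * X * c * X * z) * c := by rw [← hzc]; group
      _ = X⁻¹ * (c * c) * c := by rw [h2]
      _ = _ := by rw [pow_succ, pow_two]; group
  calc c ^ 3 * X = X * (X⁻¹ * c ^ 3) * X := by group
    _ = _ := by rw [← h3]; group

end core

section final

theorem core_contra [Finite G] {x y : G} {k : ℕ} (hx : x ^ 3 = 1) (hxy : (x * y) ^ 2 = 1)
    (hr : IsReflexive x y) (hs : IsSimple x y) (hk : Odd k) (hk1 : k ≠ 1)
    (hq : orderOf y = 2 * k) (hden : Nat.card G < 2 * (2 * k) ^ 2)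
    (hmin : ∀ i : ℕ, 0 < i → i < k → ∀ n : ℤ, y ^ i * (x * y⁻¹ * x) ≠ (x * y⁻¹ * x) * y ^ n)
    (hut : y ^ k * (x * y⁻¹ * x) = (x * y⁻¹ * x) * y ^ k) : False := by
  have hk0 : 0 < k := hk.pos
  obtain ⟨t, ht⟩ : ∃ t, t = x * y⁻¹ * x := ⟨_, rfl⟩
  obtain ⟨u, huk⟩ : ∃ u, u = y ^ k := ⟨_, rfl⟩
  have hu : u * u = 1 := by
    rw [huk, ← pow_add, ← two_mul, ← hq, pow_orderOf_eq_one]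
  have hui : u⁻¹ = u := inv_eq_of_mul_eq_one_right hu
  have hu1 : u ≠ 1 := by
    rw [huk]; intro h
    have := Nat.le_of_dvd hk0 (orderOf_dvd_of_pow_eq_one h)
    omega
  rw [← huk] at hut
  have huy : u * y = y * u := by rw [huk]; exact (Commute.refl y).pow_left k
  obtain ⟨b, hb, hbb, hbr, hyb, hxb⟩ := swap_facts hx hxy huk hk hu hut
  rw [← ht] at hut hmin
  have hxu : x * u = b * x := by rw [hb]; group
  have hxu1 : x * u ≠ u * x := by
    intro h
    have h2 : y ^ (k : ℤ) * x = x * y ^ (k : ℤ) := by rw [zpow_natCast, ← huk, h]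
    have := simple_inj hxy hs h2
    rw [zpow_natCast, ← huk] at this
    exact hu1 this
  have hbi : b⁻¹ = b := inv_eq_of_mul_eq_one_right hbb
  obtain ⟨r, hrd⟩ : ∃ r, r = u * b := ⟨_, rfl⟩
  have hri : r⁻¹ = b * u := by rw [hrd, mul_inv_rev, hui, hbi]
  obtain ⟨s, hsd⟩ : ∃ s, s = r⁻¹ * x := ⟨_, rfl⟩
  have hsd' : s = b * u * x := by rw [hsd, hri]
  have hsu : s * u = u * s := by
    rw [hsd', mul_assoc, hxu, ← mul_assoc, ← hbr]; simp only [mul_assoc]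
  have hr3 : r * r * r = 1 := by
    calc r * r * r = (u * b * u) * (b * u * b) := by rw [hrd]; group
      _ = b * u * (b * b) * u * b := by rw [hbr]; group
      _ = 1 := by rw [hbb, mul_one, mul_assoc b, hu, mul_one, hbb]
  have hr2 : r * r ≠ 1 := by
    intro h
    rw [h, one_mul, hrd] at hr3
    have : b = u := by rw [← hui]; exact eq_inv_of_mul_eq_one_right hr3
    rw [this] at hxu
    exact hxu1 hxu
  have hyr : y * r = r⁻¹ * y := by
    calc y * r = (u * y) * b := by rw [hrd, huy]; group
      _ = (u * u) * b * u * y := by rw [mul_assoc, hyb]; group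
      _ = _ := by rw [hu, hri, one_mul]
  have hxr : x * r = r * x := by
    calc x * r = x * u * b := by rw [hrd]; group
      _ = b * (x * b) := by rw [hxu]; group
      _ = (b * u * b) * u * x := by rw [hxb]; group
      _ = u * b * (u * u) * x := by rw [← hbr]; group
      _ = _ := by rw [hu, hrd, mul_one]
  have hxrs : x = r * s := by rw [hsd]; group
  have hsr : s * r = r * s := by
    rw [hsd]
    calc r⁻¹ * x * r = r⁻¹ * (x * r) := by group
      _ = _ := by rw [hxr]; group
  have hxsr : x = s * r := by rw [hsr, hxrs]
  have hyyr : Commute (y * y) r := by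
    change y * y * r = r * (y * y)
    have h1 : y * r⁻¹ = r * y := by
      calc y * r⁻¹ = r * (r⁻¹ * y) * r⁻¹ := by group
        _ = _ := by rw [← hyr]; group
    rw [mul_assoc, hyr, ← mul_assoc, h1, mul_assoc]
  have hrH : ∀ n : ℤ, r ≠ y ^ n := by
    intro n h
    have h1 : y * r = r * y := by rw [h]; exact (Commute.refl y).zpow_right n
    rw [hyr] at h1
    have h2 := mul_right_cancel h1
    apply hr2
    nth_rewrite 1 [← h2]
    group
  -- stabilizer of s
  have hsev : ∀ n m : ℤ, Even n → y ^ n * s = s * y ^ m → y ^ n = 1 := by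
    rintro n m ⟨l, rfl⟩ h
    apply simple_inj hxy hs (m := m)
    have hc : Commute (y ^ (l + l)) r := by
      rw [zpow_add, ← (Commute.refl y).mul_zpow]; exact hyyr.zpow_left l
    calc y ^ (l + l) * x = y ^ (l + l) * r * s := by rw [mul_assoc, ← hxrs]
      _ = r * (y ^ (l + l) * s) := by rw [hc.eq, mul_assoc]
      _ = _ := by rw [h, ← mul_assoc, ← hxrs]
  have hsod : ∀ n m : ℤ, y ^ n * s = s * y ^ m → y ^ n = 1 ∨ y ^ n = u := by
    intro n m h
    rcases Int.even_or_odd n with he | ho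
    · exact Or.inl (hsev n m he h)
    · right
      have h1 : y ^ (n + k) = 1 := by
        apply hsev (n + k) (m + k) (ho.add_odd (by exact_mod_cast hk))
        rw [zpow_add, zpow_add, zpow_natCast, ← huk, mul_assoc, ← hsu, ← mul_assoc, h, mul_assoc]
      rw [zpow_add, zpow_natCast, ← huk] at h1
      rw [← hui]; exact eq_inv_of_mul_eq_one_left h1
  have hcx : ∀ g : G, g * u = u * g → ∀ i j : ℤ, x ≠ y ^ i * g * y ^ j := by
    intro g hg i j h
    apply hxu1
    have c1 : Commute u (y ^ i) := Commute.zpow_right huy i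
    have c2 : Commute u (y ^ j) := Commute.zpow_right huy j
    have c3 : Commute u g := hg.symm
    rw [h]
    exact ((c1.mul_right c3).mul_right c2).symm.eq
  have hyk : ∀ i : ℕ, 0 < i → i < 2 * k → y ^ i ≠ 1 := by
    intro i h0 h1 h2
    have := Nat.le_of_dvd h0 (orderOf_dvd_of_pow_eq_one h2)
    omega
  have cx : (2 * k) * (2 * k) ≤ (dc y x).ncard := by
    have := dc_card (y := y) (g := x) (a := 2 * k) (by
      intro i h0 h1 n h
      apply hyk i h0 h1
      rw [← zpow_natCast] at h ⊢
      exact simple_inj hxy hs h)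
    rwa [hq] at this
  have ct : k * (2 * k) ≤ (dc y t).ncard := by
    have := dc_card (y := y) (g := t) (a := k) hmin
    rwa [hq] at this
  have cs : k * (2 * k) ≤ (dc y s).ncard := by
    have := dc_card (y := y) (g := s) (a := k) (by
      intro i h0 h1 n h
      rw [← zpow_natCast] at h
      rcases hsod _ _ h with h2 | h2
      · rw [zpow_natCast] at h2
        exact hyk i h0 (by omega) h2
      · rw [zpow_natCast, huk] at h2
        have := pow_injOn_Iio_orderOf (x := y) (by simp; omega) (by simp; omega) h2
        omega)
    rwa [hq] at this
  have hd1 : ¬ Disjoint (dc y s) (dc y t) := by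
    intro hd
    have := card3 hd (dc_disjoint (hcx s hsu)) (dc_disjoint (hcx t hut.symm))
    nlinarith
  have hd2 : ∃ i j : ℤ, t = y ^ i * s * y ^ j := by
    by_contra! hne
    exact hd1 (dc_disjoint hne)
  obtain ⟨i, j, hij⟩ := hd2
  -- the reflection
  have hrefl : y ^ (2 * i - 1) * s = s * y ^ (1 - 2 * j) := by
    obtain ⟨σ, h1, h2⟩ := hr
    have σu : σ u = u := by rw [huk, map_pow, h2, inv_pow, ← huk, hui]
    have hxc : x * (u * b * u) = u * x := by
      calc x * (u * b * u) = (x * u) * b * u := by group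
        _ = b * (x * b) * u := by rw [hxu]; group
        _ = (b * u * b) * u * (x * u) := by rw [hxb]; group
        _ = u * b * (u * u) * b * x := by rw [hxu, ← hbr]; group
        _ = _ := by rw [hu, mul_one, mul_assoc u, hbb, mul_one]
    have σb : σ b = u * b * u := by
      rw [hb, map_mul, map_mul, map_inv, h1, σu, inv_inv, mul_assoc, ← hxc, ← hb]; group
    have σs : σ s = y * s * y := by
      rw [hsd', map_mul, map_mul, h1, σb, σu]
      calc u * b * u * u * x⁻¹ = u * b * (u * u) * x⁻¹ := by group
        _ = r * x⁻¹ := by rw [hu, mul_one, ← hrd]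
        _ = r * y * x * y := by rw [hx_inv hxy]; group
        _ = y * r⁻¹ * x * y := by
          congr 2
          calc r * y = r * (y * r) * r⁻¹ := by group
            _ = _ := by rw [hyr]; group
        _ = y * (b * u * x) * y := by rw [hri]; group
    have σt : σ t = t := by
      rw [ht, ← t_sym hx hxy]
      simp only [map_mul, map_inv, h1, h2, inv_inv]
      exact (t_sym hx hxy).symm
    have e := congrArg σ hij
    rw [σt, map_mul, map_mul, map_zpow, map_zpow, h2, σs, inv_zpow', inv_zpow', hij] at e
    calc y ^ (2 * i - 1) * s = y ^ (i - 1) * (y ^ i * s * y ^ j) * y ^ (- j) := by group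
      _ = _ := by rw [e]; group
  have hi : y ^ (2 * i - 1) = u := by
    rcases hsod _ _ hrefl with h | h
    · exfalso
      have e4 := orderOf_dvd_iff_zpow_eq_one.mpr h
      rw [hq] at e4
      obtain ⟨n, hn⟩ := e4
      push_cast at hn
      have : 2 * i - 1 = 2 * (k * n) := by rw [hn]; ring
      omega
    · exact h
  have hj : y ^ (1 - 2 * j) = u := by
    rw [hi, ← hsu] at hrefl
    exact (mul_left_cancel hrefl).symm
  have hj' : y ^ (2 * j - 1) = u := by
    rw [← hui, ← hj, ← zpow_neg]; congr 1; ring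
  obtain ⟨Y, hY⟩ : ∃ Y, Y = y * u := ⟨_, rfl⟩
  have cyu : Commute y u := huy.symm
  have huodd : ∀ n : ℤ, u ^ (2 * n - 1) = u := by
    intro n
    have : u ^ (2 : ℤ) = 1 := by rw [zpow_two, hu]
    rw [zpow_sub, zpow_mul, this, one_zpow, one_mul, zpow_one, hui]
  have hY1 : ∀ n : ℤ, y ^ (2 * n - 1) = u → Y ^ (2 * n) = Y := by
    intro n hn
    have : Y ^ (2 * n - 1) = 1 := by rw [hY, cyu.mul_zpow, hn, huodd, hu]
    rw [zpow_sub_one] at this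
    exact mul_inv_eq_one.mp this
  have hYi := hY1 i hi
  have hYj := hY1 j hj'
  have hYij : Y ^ j = Y ^ i := by
    calc Y ^ j = (Y ^ (2 * i)) ^ j := by rw [hYi]
      _ = (Y ^ (2 * j)) ^ i := by rw [← zpow_mul, ← zpow_mul]; congr 1; ring
      _ = _ := by rw [hYj]
  obtain ⟨c, hc⟩ : ∃ c, c = Y ^ i := ⟨_, rfl⟩
  have hcc : c * c = Y := by rw [hc, ← zpow_add, ← two_mul, hYi]
  have hyY : y = Y * u := by rw [hY, mul_assoc, hu, mul_one]
  have cYu : Commute Y u := by rw [hY]; exact cyu.mul_left (Commute.refl u)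
  have cYr : Commute Y r := by
    change Y * r = r * Y
    calc Y * r = y * (u * u) * b := by rw [hY, hrd]; group
      _ = u * b * (u * y) := by rw [hu, mul_one, hyb]; group
      _ = _ := by rw [huy, hrd, hY]
  have csu : Commute s u := hsu
  have csr : Commute s r := hsr
  have hrur : r * u * r = u := by
    calc r * u * r = u * b * (u * u) * b := by rw [hrd]; group
      _ = _ := by rw [hu, mul_one, mul_assoc, hbb, mul_one]
  have hsY : (s * Y) ^ 2 = 1 := by
    have c1 : Commute (s * Y) (r * u) :=
      (csr.mul_left cYr).mul_right (csu.mul_left cYu)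
    have e1 : x * y = (s * Y) * (r * u) := by
      calc x * y = s * (r * Y) * u := by rw [hxsr, hyY]; group
        _ = _ := by rw [← cYr.eq]; group
    have e2 : (r * u) ^ 2 = 1 := by
      rw [pow_two, ← mul_assoc, hrur, hu]
    rw [e1, c1.mul_pow, e2, mul_one] at hxy
    exact hxy
  have hs3 : s ^ 3 = 1 := by
    have : Commute r⁻¹ x := (show Commute r x from hxr.symm).inv_left
    rw [hsd, this.mul_pow, hx, mul_one, inv_pow, pow_succ, pow_two, hr3, inv_one]
  have e1 : t = s * Y⁻¹ * s * u := by
    calc t = s * r * y⁻¹ * (r * s) := by rw [ht, ← hxsr, ← hxrs]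
      _ = s * r * (Y * u)⁻¹ * r * s := by rw [← hyY]; group
      _ = s * (r * Y⁻¹) * u * r * s := by rw [cYu.eq, mul_inv_rev, hui]; group
      _ = s * Y⁻¹ * (r * u * r) * s := by rw [← cYr.inv_left.eq]; group
      _ = _ := by rw [hrur, mul_assoc _ u s, ← hsu]; group
  have e2 : t = c * s * c * u ^ (i + j) := by
    have c1 : Commute (u ^ i) (s * c) := by
      rw [hc]
      exact (csu.symm.mul_right (cYu.symm.zpow_right i)).zpow_left i
    calc t = Y ^ i * u ^ i * s * (Y ^ j * u ^ j) := by
          rw [hij, ← cYu.mul_zpow, ← cYu.mul_zpow, ← hyY]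
      _ = c * (u ^ i * (s * c)) * u ^ j := by rw [hYij, ← hc]; group
      _ = _ := by rw [c1.eq, zpow_add]; group
  have e3 : s * Y⁻¹ * s = c * s * c * (u ^ (i + j) * u) := by
    rw [← mul_assoc, ← e2, e1, mul_assoc _ u u, hu, mul_one]
  have cuc : Commute u c := by rw [hc]; exact cYu.symm.zpow_right i
  have e4 := cube_comm hs3 hsY hcc
    ((csu.symm.zpow_left (i + j)).mul_left csu.symm).eq
    ((cuc.zpow_left (i + j)).mul_left cuc).eq e3
  have c3r : Commute (c ^ 3) r := by rw [hc]; exact (cYr.zpow_left i).pow_left 3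
  have c3x : Commute (c ^ 3) x := by rw [hxrs]; exact c3r.mul_right e4
  have hc3 : c ^ 3 = 1 := by
    have e5 : c ^ 3 = y ^ ((1 + (k : ℤ)) * i * 3) := by
      rw [hc, hY, huk, zpow_mul, zpow_mul, zpow_add, zpow_one, zpow_natCast]; norm_cast
    have := c3x.eq
    rw [e5] at this ⊢
    exact simple_inj hxy hs this
  have hY3 : Y ^ 3 = 1 := by
    rw [← hcc, (Commute.refl c).mul_pow, hc3, one_mul]
  have hk3 : k = 3 := by
    have : y ^ (3 + k) = 1 := by
      rw [hY, cyu.mul_pow, pow_succ u, pow_two, hu, one_mul, huk, ← pow_add] at hY3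
      exact hY3
    have h := orderOf_dvd_of_pow_eq_one this
    rw [hq] at h
    have h1 : k ∣ 3 + k := (Dvd.intro_left 2 rfl).trans h
    have h2 : k ∣ 3 := (Nat.dvd_add_left (dvd_refl k)).mp h1
    rcases (Nat.dvd_prime Nat.prime_three).mp h2 with h | h
    · exact absurd h hk1
    · exact h
  have hy2 : y * y ≠ 1 := by
    rw [← pow_two]; exact hyk 2 (by omega) (by omega)
  have ht2 : ∀ g : G, Commute (y * y) g → ∀ i j : ℤ, t ≠ y ^ i * g * y ^ j := by
    intro g hg i j h
    apply hmin 2 (by omega) (by omega) 2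
    have cy : ∀ i : ℤ, Commute (y * y) (y ^ i) := fun i =>
      ((Commute.refl y).mul_left (Commute.refl y)).zpow_right i
    rw [zpow_two, pow_two, h]
    exact (((cy i).mul_right hg).mul_right (cy j)).eq
  have hx2 : ∀ g : G, Commute (y * y) g → ∀ i j : ℤ, x ≠ y ^ i * g * y ^ j := by
    intro g hg i j h
    have cy : ∀ i : ℤ, Commute (y * y) (y ^ i) := fun i =>
      ((Commute.refl y).mul_left (Commute.refl y)).zpow_right i
    have h2 : y * y * x = x * (y * y) := by
      rw [h]
      exact (((cy i).mul_right hg).mul_right (cy j)).eq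
    rw [← zpow_two] at h2
    have := simple_inj hxy hs h2
    rw [zpow_two] at this
    exact hy2 this
  have c1 : 1 * (2 * k) ≤ (dc y 1).ncard := by
    have := dc_card (y := y) (g := 1) (a := 1) (by intro i h0 h1; omega)
    rwa [hq] at this
  have cr : 2 * (2 * k) ≤ (dc y r).ncard := by
    have := dc_card (y := y) (g := r) (a := 2) (by
      intro i h0 h1 n h
      have : i = 1 := by omega
      subst this
      rw [pow_one, hyr] at h
      apply hrH ((1 - n) + (1 - n))
      have h2 : r * r = y ^ (1 - n) := by
        calc r * r = r * (r * y ^ n) * y ^ (-n) := by group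
          _ = _ := by rw [← h]; group
      rw [zpow_add, ← h2, ← mul_assoc, hr3, one_mul])
    rwa [hq] at this
  have hfin := card4 (s := dc y 1) (t := dc y r) (u := dc y t) (v := dc y x)
    (dc_disjoint (by
      intro i j h
      apply hrH (i + j)
      rw [h, zpow_add, mul_one]))
    (dc_disjoint (ht2 1 (Commute.one_right _)))
    (dc_disjoint (ht2 r hyyr))
    (dc_disjoint (hx2 1 (Commute.one_right _)))
    (dc_disjoint (hx2 r hyyr))
    (dc_disjoint (hcx t hut.symm))
  subst hk3
  omega

end final

/-- A non-tetrahedral map as above with `T = q` is the Fermat map `Fer(1)`;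
in particular `q = 2` and `|G| = 6`. -/
theorem evenPeriod_eq_q_implies_fermat_one
    (G : Type*) [Group G] [Finite G] (x y : G)
    (hgen : Subgroup.closure {x, y} = ⊤) (hxy : (x * y) ^ 2 = 1)
    (hrefl : IsReflexive x y) (hsimple : IsSimple x y)
    (hden : 2 * orderOf y ^ 2 > Nat.card G) (hp : orderOf x = 3)
    (hnt : ¬ IsTet G x y) (hT : evenPeriod x y = orderOf y) :
    IsFermat 1 G x y ∧ orderOf y = 2 ∧ Nat.card G = 6 := by
  have hx : x ^ 3 = 1 := by rw [← hp]; exact pow_orderOf_eq_one x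
  have hq0 : 0 < orderOf y := orderOf_pos y
  have hqe : Even (orderOf y) := by
    rw [← hT, even_iff_two_dvd]; exact Nat.dvd_lcm_right _ _
  have hyk : ∀ i : ℕ, 0 < i → i < orderOf y → y ^ i ≠ 1 := by
    intro i h0 h1 h2
    have := Nat.le_of_dvd h0 (orderOf_dvd_of_pow_eq_one h2)
    omega
  obtain ⟨i, hi0, hiq, n, hn⟩ : ∃ i : ℕ, 0 < i ∧ i < orderOf y ∧ ∃ n : ℤ,
      y ^ i * (x * y⁻¹ * x) = (x * y⁻¹ * x) * y ^ n := by
    by_contra! hne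
    have h1 := dc_card (y := y) (g := x * y⁻¹ * x) (a := orderOf y) hne
    have h2 := dc_card (y := y) (g := x) (a := orderOf y) (by
      intro i h0 h1 n h
      apply hyk i h0 h1
      rw [← zpow_natCast] at h ⊢
      exact simple_inj hxy hsimple h)
    have h3 := card2 (dc_disjoint (t_not_x hx hxy hsimple hrefl hqe))
    nlinarith
  obtain ⟨hJd, l, hl⟩ := primPeriod_le hx hxy hi0 hn
  obtain ⟨J, hJ⟩ : ∃ J, J = primPeriod x y := ⟨_, rfl⟩
  obtain ⟨d, hd⟩ : ∃ d, d = i.gcd (orderOf y) := ⟨_, rfl⟩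
  have hT' : Nat.lcm J 2 = orderOf y := by rw [hJ]; exact hT
  rw [← hJ, ← hd] at hJd
  rw [← hd] at hl
  have hdi : d ≤ i := by rw [hd]; exact Nat.gcd_le_left _ hi0
  have h2d : 2 * d ≤ orderOf y := by
    obtain ⟨c, hc⟩ : d ∣ orderOf y := by rw [hd]; exact Nat.gcd_dvd_right _ _
    have : c ≠ 0 := by rintro rfl; omega
    have : c ≠ 1 := by rintro rfl; omega
    rw [hc, mul_comm]
    exact Nat.mul_le_mul_left d (by omega)
  have hodd : Odd J := by
    by_contra hev
    rw [Nat.not_odd_iff_even, even_iff_two_dvd] at hev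
    rw [Nat.lcm_eq_left hev] at hT'
    omega
  have hq : orderOf y = 2 * J := by
    rw [← hT', Nat.Coprime.lcm_eq_mul (Nat.coprime_two_right.mpr hodd), mul_comm]
  have hdJ : d = J := by omega
  subst hdJ
  by_cases hd1 : d = 1
  · exact fermat_of G x y hgen hxy hp (by omega)
  exfalso
  obtain ⟨t, ht⟩ : ∃ t, t = x * y⁻¹ * x := ⟨_, rfl⟩
  refine core_contra hx hxy hrefl hsimple hodd hd1 hq (by rw [hq] at hden; exact hden) ?_ ?_
  · intro i' h0 h1 n' h
    have h2 := (primPeriod_le hx hxy h0 h).1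
    have h3 := Nat.gcd_le_left (orderOf y) h0
    omega
  · have hu : y ^ d * y ^ d = 1 := by
      rw [← pow_add, ← two_mul, ← hq, pow_orderOf_eq_one]
    rw [hl]
    congr 1
    rw [← ht] at hl
    have e0 : y ^ l = t⁻¹ * y ^ d * t := by rw [mul_assoc, hl]; group
    have e1 : y ^ (l * 2) = 1 := by
      rw [zpow_mul, zpow_two, e0]
      calc t⁻¹ * y ^ d * t * (t⁻¹ * y ^ d * t) = t⁻¹ * (y ^ d * y ^ d) * t := by group
        _ = 1 := by rw [hu]; group
    have e2 := orderOf_dvd_iff_zpow_eq_one.mpr e1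
    rw [hq] at e2
    push_cast at e2
    rw [mul_comm] at e2
    obtain ⟨m, rfl⟩ := Int.dvd_of_mul_dvd_mul_right (by norm_num) e2
    rw [zpow_mul, zpow_natCast] at e0 ⊢
    rcases Int.even_or_odd' m with ⟨m', rfl | rfl⟩
    · exfalso
      rw [zpow_mul, zpow_two, hu, one_zpow] at e0
      apply hyk d (by omega) (by omega)
      calc y ^ d = t * (t⁻¹ * y ^ d * t) * t⁻¹ := by group
        _ = 1 := by rw [← e0]; group
    · rw [zpow_add, zpow_mul, zpow_two, hu, one_zpow, one_mul, zpow_one]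

end RegularMap
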